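/- Let p ∈ (0,1) with p ≠ 1/2. Then there exists α ∈ (0, 1/2) such that 1 − h₂(α ∗ α ∗ p) > (1 − h₂(α)) · (1 − h₂(p)), where a ∗ b = a·(1 − b) + b·(1 − a) and h₂(t) = −t·log₂ t − (1 − t)·log₂(1 − t) is the binary entropy in bits. (At sufficiently large rate R = 1 − h₂(α), Han's random quantization scheme achieves a strictly higher Stein exponent, E_Han(R) = 1 − h₂(α ∗ α ∗ p), than truncation, whose exponent for testing DSBS(p) against independence is E_tr(R) = R · d₂(p ‖ 1/2) = R · (1 − h₂(p)); hence truncation, and consequently any linear code, is strictly suboptimal for testing against independence.) -/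

import Mathlib

/-!
Near `α = 0` the two sides lose exponent at different orders. The point `α ∗ α ∗ p` is within
`2α` of `p`, so the Gibbs inequality (`binEntropy_sub_le`) makes `h₂(α ∗ α ∗ p) - h₂(p)` at most
linear in `α`, while `h₂(α)` is at least `α log₂ (1/α)`, which beats every linear function of `α`.
Since `1 - h₂(p) > 0` for `p ≠ 1/2`, the term `h₂(α) (1 - h₂(p))` wins once `α` is small; taking
`α = exp (-K)` turns this into the explicit requirement
`K (log 2 - H(p)) > 2 |log p - log (1 - p)| log 2`, with `H` the entropy in nats.
-/

/-- Binary convolution `a ∗ b = a(1-b) + b(1-a)`. -/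
def conv (a b : ℝ) : ℝ := a * (1 - b) + b * (1 - a)

/-- Binary entropy in bits: `h₂(t) = −t·log₂ t − (1−t)·log₂(1−t)`. -/
noncomputable def h2 (t : ℝ) : ℝ := -t * Real.logb 2 t - (1 - t) * Real.logb 2 (1 - t)

lemma h2_eq_binEntropy_div (t : ℝ) : h2 t = Real.binEntropy t / Real.log 2 := by
  rw [h2, Real.binEntropy, Real.logb, Real.logb, Real.log_inv, Real.log_inv]
  ring

lemma conv_mem_Ioo {a b : ℝ} (ha : a ∈ Set.Ioo (0 : ℝ) 1) (hb : b ∈ Set.Ioo (0 : ℝ) 1) :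
    conv a b ∈ Set.Ioo (0 : ℝ) 1 := by
  obtain ⟨ha0, ha1⟩ := ha
  obtain ⟨hb0, hb1⟩ := hb
  have h₁ := mul_pos ha0 (sub_pos.2 hb1)
  have h₂ := mul_pos hb0 (sub_pos.2 ha1)
  have h₃ := mul_pos ha0 hb0
  have h₄ := mul_pos (sub_pos.2 ha1) (sub_pos.2 hb1)
  constructor <;> unfold conv <;> nlinarith

/-- One term of the Gibbs inequality. -/
lemma mul_log_sub_log_le {p q : ℝ} (hp : 0 < p) (hq : 0 < q) :
    q * (Real.log p - Real.log q) ≤ p - q := by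
  rw [← Real.log_div hp.ne' hq.ne']
  calc q * Real.log (p / q) ≤ q * (p / q - 1) :=
        mul_le_mul_of_nonneg_left (Real.log_le_sub_one_of_pos (div_pos hp hq)) hq.le
    _ = p - q := by field_simp

/-- The graph of the binary entropy lies below its tangent at `p`: this is nonnegativity of the
relative entropy of Bernoulli(`q`) with respect to Bernoulli(`p`). -/
lemma binEntropy_sub_le {p q : ℝ} (hp : p ∈ Set.Ioo (0 : ℝ) 1) (hq : q ∈ Set.Ioo (0 : ℝ) 1) :
    Real.binEntropy q - Real.binEntropy p ≤ (p - q) * (Real.log p - Real.log (1 - p)) := by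
  have h₁ := mul_log_sub_log_le hp.1 hq.1
  have h₂ := mul_log_sub_log_le (sub_pos.2 hp.2) (sub_pos.2 hq.2)
  simp only [Real.binEntropy, Real.log_inv]
  linarith

lemma neg_mul_log_le_binEntropy {a : ℝ} (ha : a ∈ Set.Ioo (0 : ℝ) 1) :
    -(a * Real.log a) ≤ Real.binEntropy a := by
  have h := mul_nonneg_of_nonpos_of_nonpos
    (by linarith [ha.2] : -(1 - a) ≤ 0)
    (Real.log_nonpos (by linarith [ha.2]) (by linarith [ha.1]) : Real.log (1 - a) ≤ 0)
  simp only [Real.binEntropy, Real.log_inv]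
  linarith

lemma abs_sub_conv_conv_le {a p : ℝ} (ha : a ∈ Set.Ioo (0 : ℝ) 1) (hp : p ∈ Set.Ioo (0 : ℝ) 1) :
    |p - conv a (conv a p)| ≤ 2 * a := by
  have h : p - conv a (conv a p) = (2 * a) * ((1 - a) * (2 * p - 1)) := by
    unfold conv
    ring
  have h₁ : |1 - a| ≤ 1 := abs_le.2 ⟨by linarith [ha.2], by linarith [ha.1]⟩
  have h₂ : |2 * p - 1| ≤ 1 := abs_le.2 ⟨by linarith [hp.1], by linarith [hp.2]⟩
  have h₃ : 0 < 2 * a := by linarith [ha.1]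
  rw [h, abs_mul, abs_of_pos h₃, abs_mul]
  exact mul_le_of_le_one_right h₃.le (mul_le_one₀ h₁ (abs_nonneg _) h₂)

/-- Han's random quantization beats truncation for testing `DSBS(p)` against
independence: for `p ∈ (0,1)`, `p ≠ 1/2`, there is an `α ∈ (0, 1/2)` with
`E_Han = 1 − h₂(α ∗ α ∗ p) > (1 − h₂(α)) · (1 − h₂(p)) = R · d₂(p ‖ 1/2) = E_tr(R)`
at rate `R = 1 − h₂(α)`; hence truncation, and consequently any linear code, is
strictly suboptimal. -/
theorem han_beats_truncation (p : ℝ) (hp : p ∈ Set.Ioo (0 : ℝ) 1) (hp' : p ≠ 1 / 2) :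
    ∃ α ∈ Set.Ioo (0 : ℝ) (1 / 2),
      1 - h2 (conv α (conv α p)) > (1 - h2 α) * (1 - h2 p) := by
  have hL : 0 < Real.log 2 := Real.log_pos one_lt_two
  have hc : 0 < Real.log 2 - Real.binEntropy p :=
    sub_pos.2 (Real.binEntropy_lt_log_two.2 (by simpa using hp'))
  set c := Real.log 2 - Real.binEntropy p with hc_def
  set D := |Real.log p - Real.log (1 - p)| with hD_def
  have hD : 0 ≤ D := abs_nonneg _
  obtain ⟨K, hK1, hKc⟩ : ∃ K : ℝ, 1 ≤ K ∧ 2 * D * Real.log 2 < K * c := by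
    refine ⟨2 * D * Real.log 2 / c + 1, le_add_of_nonneg_left (by positivity), ?_⟩
    rw [add_mul, div_mul_cancel₀ _ hc.ne']
    linarith
  have hα0 : 0 < Real.exp (-K) := Real.exp_pos _
  have hα2 : Real.exp (-K) < 1 / 2 := by
    rw [Real.exp_neg, one_div]
    apply inv_strictAnti₀ two_pos
    linarith [Real.exp_one_gt_d9, Real.exp_le_exp.2 hK1]
  have hlog : Real.log (Real.exp (-K)) = -K := Real.log_exp _
  refine ⟨Real.exp (-K), ⟨hα0, hα2⟩, ?_⟩
  generalize Real.exp (-K) = α at hα0 hα2 hlog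
  have hα : α ∈ Set.Ioo (0 : ℝ) 1 := ⟨hα0, by linarith⟩
  have hB : α * K ≤ Real.binEntropy α := by
    have := neg_mul_log_le_binEntropy hα
    rw [hlog] at this
    linarith
  have hinc : Real.binEntropy (conv α (conv α p)) - Real.binEntropy p ≤ 2 * α * D :=
    calc _ ≤ (p - conv α (conv α p)) * (Real.log p - Real.log (1 - p)) :=
          binEntropy_sub_le hp (conv_mem_Ioo hα (conv_mem_Ioo hα hp))
      _ ≤ |p - conv α (conv α p)| * D := by
          rw [hD_def, ← abs_mul]
          exact le_abs_self _
      _ ≤ 2 * α * D := mul_le_mul_of_nonneg_right (abs_sub_conv_conv_le hα hp) hD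
  have key : (Real.binEntropy (conv α (conv α p)) - Real.binEntropy p) * Real.log 2
      < Real.binEntropy α * c :=
    calc _ ≤ 2 * α * D * Real.log 2 := mul_le_mul_of_nonneg_right hinc hL.le
      _ = α * (2 * D * Real.log 2) := by ring
      _ < α * (K * c) := mul_lt_mul_of_pos_left hKc hα0
      _ = α * K * c := by ring
      _ ≤ _ := mul_le_mul_of_nonneg_right hB hc.le
  simp only [h2_eq_binEntropy_div]
  -- The difference of the two sides is the gap in `key` divided by `(log 2)²`.
  have hpos := div_pos (sub_pos.2 key) (pow_pos hL 2)
  rw [gt_iff_lt, ← sub_pos]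
  refine hpos.trans_eq ?_
  rw [hc_def]
  field_simp
  ring
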